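/- arXiv:2311.00251 — 4 statements merged into one kernel-verified Lean document; each statement's English description precedes it below -/
import Mathlib

section
/- Let K be a nonempty connected compact subset of ℂ which is the union of a finite family (K_j), j ∈ J, of nonempty compact subsets of ℂ, none of which is a single point (each K_j contains at least two distinct points). If the diameter of K equals the sum over j ∈ J of the diameters of the K_j, then no point of K belongs to three of the sets: for all pairwise distinct indices i, j, k ∈ J, the intersection K_i ∩ K_j ∩ K_k is empty. -/
/-!
The argument takes place in the intersection graph of the family: `i` and `j` are adjacent when
`K i` and `K j` meet. As the union is connected and the finitely many `K j` are closed, this graph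
is connected. Take `a`, `b` in the union at distance `diam (⋃ j, K j)`, say `a ∈ K u`, `b ∈ K v`,
and a geodesic from `u` to `v`. By the triangle inequality along it, `dist a b` is at most the sum
of the diameters over the vertices of the geodesic. By the hypothesis on the diameters, and since
each of them is positive, the geodesic visits every index. Hence the graph distance to `u` is
injective on `J`, and adjacent vertices have distances differing by at most one, so the graph has
no triangle. A point common to three of the sets would give one.
-/

/-- The intersection graph of a family of sets: two distinct indices are adjacent when the
corresponding sets meet. -/
def intersectionGraph {J X : Type*} (K : J → Set X) : SimpleGraph J where
  Adj i j := i ≠ j ∧ (K i ∩ K j).Nonempty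
  symm := ⟨fun _ _ h => ⟨h.1.symm, Set.inter_comm _ _ ▸ h.2⟩⟩
  loopless := ⟨fun _ h => h.1 rfl⟩

theorem intersectionGraph_connected {J X : Type*} [Finite J] [Nonempty J] [TopologicalSpace X]
    (K : J → Set X) (hclosed : ∀ j, IsClosed (K j)) (hne : ∀ j, (K j).Nonempty)
    (hconn : IsPreconnected (⋃ j, K j)) : (intersectionGraph K).Connected := by
  refine ⟨fun u v => ?_⟩
  by_contra huv
  -- The sets reachable from `u` and the other ones form two closed pieces covering the union.
  let R : Set J := {j | (intersectionGraph K).Reachable u j}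
  obtain ⟨a, ha⟩ := hne u
  obtain ⟨b, hb⟩ := hne v
  obtain ⟨x, -, hx, hx'⟩ := isPreconnected_closed_iff.1 hconn (⋃ j ∈ R, K j) (⋃ j ∈ Rᶜ, K j)
    ((Set.toFinite R).isClosed_biUnion fun j _ => hclosed j)
    ((Set.toFinite Rᶜ).isClosed_biUnion fun j _ => hclosed j)
    (by
      intro x hx
      obtain ⟨j, hj⟩ := Set.mem_iUnion.1 hx
      by_cases h : j ∈ R
      · exact Or.inl (Set.mem_biUnion h hj)
      · exact Or.inr (Set.mem_biUnion (show j ∈ Rᶜ from h) hj))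
    ⟨a, Set.mem_iUnion_of_mem u ha, Set.mem_biUnion (SimpleGraph.Reachable.refl u) ha⟩
    ⟨b, Set.mem_iUnion_of_mem v hb, Set.mem_biUnion (show v ∈ Rᶜ from huv) hb⟩
  obtain ⟨i, hi, hxi⟩ := Set.mem_iUnion₂.1 hx
  obtain ⟨j, hj, hxj⟩ := Set.mem_iUnion₂.1 hx'
  have hij : (intersectionGraph K).Adj i j := ⟨fun h => hj (h ▸ hi), x, hxi, hxj⟩
  exact hj (SimpleGraph.Reachable.trans hi hij.reachable)

/-- The triangle inequality along a chain of sets, each meeting the next. -/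
theorem dist_le_sum_diam_support {J X : Type*} [PseudoMetricSpace X] (K : J → Set X)
    (hbdd : ∀ j, Bornology.IsBounded (K j)) {u v : J} (p : (intersectionGraph K).Walk u v) :
    ∀ x ∈ K u, ∀ y ∈ K v, dist x y ≤ (p.support.map fun j => Metric.diam (K j)).sum := by
  induction p with
  | nil =>
    intro x hx y hy
    simpa using Metric.dist_le_diam_of_mem (hbdd _) hx hy
  | cons h p ih =>
    intro x hx y hy
    obtain ⟨z, hzu, hzv⟩ := h.2
    have h₁ := Metric.dist_le_diam_of_mem (hbdd _) hx hzu
    have h₂ := ih z hzv y hy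
    have h₃ := dist_triangle x z y
    simp only [SimpleGraph.Walk.support_cons, List.map_cons, List.sum_cons]
    linarith

theorem dist_injOn_support_of_geodesic {V : Type*} {G : SimpleGraph V} {u v : V} (p : G.Walk u v)
    (hp : p.length = G.dist u v) : Set.InjOn (G.dist u) {w | w ∈ p.support} := by
  have key : ∀ w ∈ p.support, p.getVert (G.dist u w) = w := by
    intro w hw
    obtain ⟨n, rfl, hn⟩ := SimpleGraph.Walk.mem_support_iff_exists_getVert.1 hw
    have h := SimpleGraph.length_eq_dist_of_subwalk hp (p.isSubwalk_take n)
    rw [SimpleGraph.Walk.take_length, min_eq_left hn] at h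
    rw [← h]
  intro w hw w' hw' h
  rw [← key w hw, ← key w' hw', h]

/-- **Fact 1.** Let `K` be a nonempty connected compact set in `ℂ` which is the union of
finitely many nonempty compact sets `K j`, none of which is a single point. If the diameter
of `K` is the sum of the diameters of the `K j`, then no point of `K` belongs to three
distinct `K j`. -/
theorem fact1_no_triple_point {J : Type*} [Fintype J] [Nonempty J]
    (K : J → Set ℂ)
    (hcompact : ∀ j, IsCompact (K j))
    (hne : ∀ j, (K j).Nonempty)
    (hnotsingle : ∀ j, ∃ x ∈ K j, ∃ y ∈ K j, x ≠ y)
    (hKcompact : IsCompact (⋃ j, K j))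
    (hKconn : IsConnected (⋃ j, K j))
    (hdiam : Metric.diam (⋃ j, K j) = ∑ j, Metric.diam (K j)) :
    ∀ i j k : J, i ≠ j → j ≠ k → i ≠ k → K i ∩ K j ∩ K k = ∅ := by
  intro i j k hij hjk hik
  rw [Set.eq_empty_iff_forall_notMem]
  rintro x ⟨⟨hxi, hxj⟩, hxk⟩
  classical
  have hbdd : ∀ j, Bornology.IsBounded (K j) := fun j => (hcompact j).isBounded
  have hpos : ∀ j, 0 < Metric.diam (K j) := by
    intro j
    obtain ⟨y, hy, z, hz, hyz⟩ := hnotsingle j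
    exact (dist_pos.2 hyz).trans_le (Metric.dist_le_diam_of_mem (hbdd j) hy hz)
  have hG := intersectionGraph_connected K (fun j => (hcompact j).isClosed) hne
    hKconn.isPreconnected
  obtain ⟨⟨a, b⟩, ⟨ha, hb⟩, hmax⟩ := (hKcompact.prod hKcompact).exists_isMaxOn
    (hKconn.nonempty.prod hKconn.nonempty) (f := fun q : ℂ × ℂ => dist q.1 q.2)
    (by fun_prop)
  have hab : Metric.diam (⋃ j, K j) ≤ dist a b :=
    Metric.diam_le_of_forall_dist_le dist_nonneg fun y hy z hz =>
      hmax (show (y, z) ∈ (⋃ j, K j) ×ˢ (⋃ j, K j) from ⟨hy, hz⟩)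
  obtain ⟨u, hu⟩ := Set.mem_iUnion.1 ha
  obtain ⟨v, hv⟩ := Set.mem_iUnion.1 hb
  obtain ⟨p, hpath, hp⟩ := hG.exists_path_of_dist u v
  have hle := dist_le_sum_diam_support K hbdd p a hu b hv
  rw [← List.sum_toFinset _ hpath.support_nodup] at hle
  have hall : ∀ w, w ∈ p.support := by
    intro w
    by_contra hw
    have hlt : ∑ j ∈ p.support.toFinset, Metric.diam (K j) < ∑ j, Metric.diam (K j) :=
      Finset.sum_lt_sum_of_subset (Finset.subset_univ _) (Finset.mem_univ w)
        (by simpa using hw) (hpos w) fun j _ _ => (hpos j).le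
    linarith
  have hinj := dist_injOn_support_of_geodesic p hp
  have hne₁ := hinj.ne (hall i) (hall j) hij
  have hne₂ := hinj.ne (hall j) (hall k) hjk
  have hne₃ := hinj.ne (hall i) (hall k) hik
  -- Three pairwise distinct integers cannot pairwise differ by at most one.
  have hadj : ∀ s t, s ≠ t → x ∈ K s → x ∈ K t →
      (intersectionGraph K).dist u t ≤ (intersectionGraph K).dist u s + 1 := by
    intro s t hst hs ht
    have h₁ : (intersectionGraph K).dist s t = 1 :=
      SimpleGraph.dist_eq_one_iff_adj.2 ⟨hst, x, hs, ht⟩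
    exact h₁ ▸ hG.dist_triangle
  have h₁ := hadj i j hij hxi hxj
  have h₂ := hadj j i hij.symm hxj hxi
  have h₃ := hadj j k hjk hxj hxk
  have h₄ := hadj k j hjk.symm hxk hxj
  have h₅ := hadj i k hik hxi hxk
  have h₆ := hadj k i hik.symm hxk hxi
  omega
end

section
/- Let p ≥ 2 and let C be a compact subset of the Euclidean space ℝ^p with nonempty interior. Then there exists ε > 0 such that for every finite family (C_j), j ∈ J, of compact subsets of ℝ^p with C ⊆ ⋃_{j∈J} C_j and diam(C_j) < ε for every j ∈ J, there exist pairwise distinct indices i, j, k ∈ J and a point x ∈ C with x ∈ C_i ∩ C_j ∩ C_k. (Equivalently: a compact set in ℝ^p, p ≥ 2, with nonempty interior cannot be covered by finitely many compact sets of arbitrarily small diameter such that no point of C belongs to three distinct sets of the cover.) -/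
/-!
The interior of `C` contains a ball, hence an isometric copy of a closed planar disc of some
radius `r`, so it suffices to treat covers of a disc in `ℂ` (`planar`).

Suppose no point of the disc lies in three members `D j` of a fine cover. By compactness (`sep`)
the same is true of slightly enlarged members, so a partition of unity subordinate to those has at
most two nonzero terms at each point. Choosing `q j ∈ D j` and averaging the `q j` with this
partition of unity gives a continuous `f` that moves every point by less than `r / 2` and takes
values in the finite union of segments `[q i, q j]`. That union has area zero (`segment_null`), so
`f` avoids some `c` with `‖c‖ < r / 2`. Then `f - c` has no zero on the disc, yet is at distance
less than `r` from the identity on the boundary circle, where it therefore has winding number `1`.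
This is impossible (`noMap`).
-/

open Metric MeasureTheory Topology

/-- A zero-free continuous `h : ℂ → ℂ` cannot stay at distance less than `r` from the identity on
the whole circle of radius `r` around `0`. Being zero-free on a simply connected space, `h` would
have a continuous logarithm `g`; on the circle `g (r e^{it})` differs from `i t + log r` by the
principal logarithm of a quantity at distance less than `1` from `1`, up to a constant in `2πi ℤ`,
so it would grow by `2πi` over one turn. -/
theorem noMap {r : ℝ} (hr : 0 < r) (h : C(ℂ, ℂ)) (h0 : ∀ z, h z ≠ 0)
    (hb : ∀ z, ‖z‖ = r → ‖h z - z‖ < r) : False := by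
  obtain ⟨g, ⟨-, hg⟩, -⟩ := Complex.isCoveringMapOn_exp.existsUnique_continuousMap_lifts
    h (a₀ := 0) (e₀ := Complex.log (h 0)) (Complex.exp_log (h0 0)) (fun z => h0 z)
  have hg' : ∀ z, Complex.exp (g z) = h z := fun z => congrFun hg z
  let w : ℝ → ℂ := fun t => r * Complex.exp (t * Complex.I)
  have hwc : Continuous w := by fun_prop
  have hw0 : ∀ t, w t ≠ 0 := fun t => by
    simp [w, hr.ne', Complex.exp_ne_zero]
  have hwn : ∀ t, ‖w t‖ = r := fun t => by
    simp [w, Complex.norm_exp_ofReal_mul_I, abs_of_pos hr]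
  have hslit : ∀ t, h (w t) / w t ∈ Complex.slitPlane := fun t => by
    have : ‖h (w t) / w t - 1‖ < 1 := by
      rw [div_sub_one (hw0 t), norm_div, hwn, div_lt_one hr]
      exact hb _ (hwn t)
    have h2 := (Complex.abs_re_le_norm _).trans_lt this
    left
    simp only [Complex.sub_re, Complex.one_re, abs_lt] at h2
    linarith
  let F : ℝ → ℂ := fun t => g (w t) - t * Complex.I - Real.log r - Complex.log (h (w t) / w t)
  have hFc : Continuous F := by
    have : Continuous fun t => Complex.log (h (w t) / w t) :=
      ((h.continuous.comp hwc).div hwc hw0).clog hslit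
    fun_prop
  have hF1 : ∀ t, Complex.exp (F t) = 1 := fun t => by
    have h3 := h0 (w t)
    have h4 := hw0 t
    have h5 : Complex.exp (Real.log r) = r := by
      rw [← Complex.ofReal_exp, Real.exp_log hr]
    simp only [F]
    rw [Complex.exp_sub, Complex.exp_sub, Complex.exp_sub, hg', h5, 
      Complex.exp_log (div_ne_zero h3 h4)]
    have : w t = r * Complex.exp (t * Complex.I) := rfl
    have h6 : (r : ℂ) ≠ 0 := by exact_mod_cast hr.ne'
    have h7 := Complex.exp_ne_zero (t * Complex.I)
    rw [div_div_eq_mul_div, div_eq_one_iff_eq h3]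
    rw [eq_div_of_mul_eq h6 ((mul_comm _ _).trans this.symm)]
    field_simp
  -- `F` takes values in the discrete fibre of `exp` over `1`, hence is constant.
  have hconst : F 0 = F (2 * Real.pi) := by
    refine Complex.isCoveringMap_exp.const_of_comp hFc (fun s t => ?_) _ _
    simp only [hF1]
  have hw : w (2 * Real.pi) = w 0 := by simp [w]
  simp only [F, hw] at hconst
  have : (2 * Real.pi : ℂ) * Complex.I = 0 := by
    push_cast at hconst
    linear_combination hconst
  exact Complex.two_pi_I_ne_zero this

theorem segment_null (a b : ℂ) : volume (segment ℝ a b) = 0 := by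
  refine measure_mono_null (t := (affineSpan ℝ {a, b} : Set ℂ)) ?_ ?_
  · rw [← convexHull_pair]; exact convexHull_subset_affineSpan _
  · refine Measure.addHaar_affineSubspace _ _ fun h => ?_
    have h1 := collinear_iff_finrank_le_one.1 (collinear_pair ℝ a b)
    rw [← direction_affineSpan, h, AffineSubspace.direction_top, finrank_top,
      Complex.finrank_real_complex] at h1
    omega

/-- If no point of the compact set `B` lies in three of the closed sets `D j`, then, by compactness,
the same holds for their open `δ`-neighbourhoods once `δ` is small. -/
theorem sep {J : Type} [Fintype J] {X : Type} [MetricSpace X] {B : Set X} (hB : IsCompact B)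
    {s : ℝ} (hs : 0 < s) (D : J → Set X) (hD : ∀ j, IsClosed (D j)) (hne : ∀ j, (D j).Nonempty)
    (hno : ∀ i j k, i ≠ j → j ≠ k → i ≠ k → ∀ x ∈ B, x ∉ D i ∩ D j ∩ D k) :
    ∃ δ > 0, δ ≤ s ∧ ∀ i j k, i ≠ j → j ≠ k → i ≠ k → ∀ x ∈ B,
      δ ≤ infDist x (D i) ∨ δ ≤ infDist x (D j) ∨ δ ≤ infDist x (D k) := by
  have key : ∀ᶠ δ in 𝓝[>] (0 : ℝ), ∀ i j k, i ≠ j → j ≠ k → i ≠ k → ∀ x ∈ B,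
      δ ≤ infDist x (D i) ∨ δ ≤ infDist x (D j) ∨ δ ≤ infDist x (D k) := by
    simp only [Filter.eventually_all]
    intro i j k hij hjk hik
    rcases B.eq_empty_or_nonempty with rfl | hBne
    · simp
    let m : X → ℝ := fun x => max (infDist x (D i)) (max (infDist x (D j)) (infDist x (D k)))
    have hm : Continuous m := by fun_prop
    obtain ⟨x₀, hx₀, hmin⟩ := hB.exists_isMinOn hBne hm.continuousOn
    have hpos : 0 < m x₀ := by
      by_contra! h
      simp only [m, max_le_iff] at h
      refine hno i j k hij hjk hik x₀ hx₀ ⟨⟨?_, ?_⟩, ?_⟩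
      · exact ((hD i).mem_iff_infDist_zero (hne i)).2 (le_antisymm h.1 infDist_nonneg)
      · exact ((hD j).mem_iff_infDist_zero (hne j)).2 (le_antisymm h.2.1 infDist_nonneg)
      · exact ((hD k).mem_iff_infDist_zero (hne k)).2 (le_antisymm h.2.2 infDist_nonneg)
    filter_upwards [Ioc_mem_nhdsGT hpos] with δ hδ x hx
    have := hδ.2.trans (hmin hx)
    simpa only [m, le_max_iff] using this
  obtain ⟨δ, h1, h2⟩ := (key.and (Ioc_mem_nhdsGT hs)).exists
  exact ⟨δ, h2.1, h2.2, h1⟩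

/-- The planar case: a fine finite cover of a disc in `ℂ` by nonempty closed sets has a point of
the disc in three of its members. -/
theorem planar {J : Type} [Fintype J] {r : ℝ} (hr : 0 < r) (D : J → Set ℂ)
    (hD : ∀ j, IsClosed (D j)) (hne : ∀ j, (D j).Nonempty)
    (hcov : closedBall 0 r ⊆ ⋃ j, D j)
    (hdiam : ∀ j, ∀ x ∈ D j, ∀ y ∈ D j, dist x y < r / 4) :
    ∃ i j k, i ≠ j ∧ j ≠ k ∧ i ≠ k ∧ ∃ x ∈ closedBall 0 r, x ∈ D i ∩ D j ∩ D k := by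
  classical
  by_contra! hno
  obtain ⟨δ, hδ, hδr, hsep⟩ := sep (isCompact_closedBall (0 : ℂ) r) (s := r / 4) (by positivity)
    D hD hne hno
  choose q hq using hne
  -- Normalized, the `φ j` form a partition of unity on the disc, and `f` is the resulting
  -- continuous approximation of the identity.
  let φ : J → ℂ → ℝ := fun j x => max 0 (δ - infDist x (D j))
  have hφ0 : ∀ j x, 0 ≤ φ j x := fun j x => le_max_left _ _
  have hφc : ∀ j, Continuous (φ j) := fun j => by fun_prop
  have hφlt : ∀ j x, φ j x ≠ 0 → infDist x (D j) < δ := fun j x h => by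
    by_contra! h'
    exact h (max_eq_left (by linarith))
  have hS : ∀ x ∈ closedBall (0 : ℂ) r, 0 < ∑ j, φ j x := fun x hx => by
    obtain ⟨j, hj⟩ := Set.mem_iUnion.1 (hcov hx)
    refine Finset.sum_pos' (fun j _ => hφ0 j x) ⟨j, Finset.mem_univ j, lt_max_of_lt_right ?_⟩
    rw [infDist_zero_of_mem hj]; linarith
  let f : ℂ → ℂ := fun x => Finset.univ.centerMass (fun j => φ j x) q
  let T : ℂ → Finset J := fun x => {j | φ j x ≠ 0}
  have hf : ∀ x ∈ closedBall (0 : ℂ) r, f x ∈ convexHull ℝ (q '' T x) := fun x hx => by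
    have h1 : f x = (T x).centerMass (fun j => φ j x) q :=
      (Finset.centerMass_filter_ne_zero _).symm
    rw [h1]
    refine Finset.centerMass_mem_convexHull _ (fun j _ => hφ0 j x) ?_
      fun j hj => Set.mem_image_of_mem q hj
    rw [Finset.sum_filter_ne_zero]
    exact hS x hx
  have hfx : ∀ x ∈ closedBall (0 : ℂ) r, f x ∈ ball x (r / 2) := fun x hx => by
    refine convexHull_min ?_ (convex_ball x _) (hf x hx)
    rintro _ ⟨j, hj, rfl⟩
    obtain ⟨y, hy, hxy⟩ := (infDist_lt_iff ⟨q j, hq j⟩).1 (hφlt j x (Finset.mem_filter.1 hj).2)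
    have h1 := hdiam j _ (hq j) y hy
    have h2 := dist_triangle_right (q j) x y
    rw [mem_ball]
    linarith
  have hfseg : ∀ x ∈ closedBall (0 : ℂ) r, ∃ i j, f x ∈ segment ℝ (q i) (q j) := fun x hx => by
    have hT : (T x).card ≤ 2 := by
      by_contra! h
      obtain ⟨i, hi, j, hj, k, hk, hij, hik, hjk⟩ := Finset.two_lt_card.1 h
      have hi' := hφlt _ _ (Finset.mem_filter.1 hi).2
      have hj' := hφlt _ _ (Finset.mem_filter.1 hj).2
      have hk' := hφlt _ _ (Finset.mem_filter.1 hk).2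
      rcases hsep i j k hij hjk hik x hx with h | h | h <;> linarith
    have hsub : ∃ i j, T x ⊆ {i, j} := by
      have h0 : (T x).Nonempty := by
        have := convexHull_nonempty_iff.1 ⟨_, hf x hx⟩
        simpa using this
      obtain ⟨i, hi⟩ := h0
      rcases Nat.lt_or_ge (T x).card 2 with h | h
      · exact ⟨i, i, fun j hj => by simp [Finset.card_le_one.1 (by omega) j hj i hi]⟩
      · obtain ⟨a, b, -, hab⟩ := Finset.card_eq_two.1 (le_antisymm hT h)
        exact ⟨a, b, hab.le⟩
    obtain ⟨i, j, hij⟩ := hsub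
    refine ⟨i, j, ?_⟩
    rw [← convexHull_pair, ← Set.image_pair]
    refine convexHull_mono (Set.image_mono ?_) (hf x hx)
    intro a ha
    simpa using hij ha
  obtain ⟨c, hc, hcseg⟩ : ∃ c ∈ ball (0 : ℂ) (r / 2), c ∉ ⋃ i, ⋃ j, segment ℝ (q i) (q j) := by
    by_contra! h
    refine (measure_ball_pos volume (0 : ℂ) (half_pos hr)).ne' (measure_mono_null h ?_)
    exact measure_iUnion_null fun i => measure_iUnion_null fun j => segment_null _ _
  -- The radial retraction onto the disc makes `f` globally defined on the simply connected `ℂ`.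
  let ρ : ℂ → ℂ := fun z => (r / max r ‖z‖) • z
  have hmax : ∀ z : ℂ, 0 < max r ‖z‖ := fun z => lt_max_of_lt_left hr
  have hρc : Continuous ρ := by
    refine Continuous.smul (Continuous.div (by fun_prop) (by fun_prop) fun z => (hmax z).ne')
      continuous_id
  have hρm : ∀ z, ρ z ∈ closedBall (0 : ℂ) r := fun z => by
    rw [mem_closedBall_zero_iff, norm_smul, Real.norm_of_nonneg (by have := hmax z; positivity),
      div_mul_eq_mul_div, div_le_iff₀ (hmax z)]
    gcongr
    exact le_max_right _ _
  have hfc : Continuous fun z => f (ρ z) - c := by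
    refine Continuous.sub ?_ continuous_const
    have h1 : Continuous fun z => ∑ j, φ j (ρ z) :=
      continuous_finsetSum _ fun j _ => (hφc j).comp hρc
    have h2 : Continuous fun z => ∑ j, φ j (ρ z) • q j :=
      continuous_finsetSum _ fun j _ => ((hφc j).comp hρc).smul continuous_const
    exact (h1.inv₀ fun z => (hS _ (hρm z)).ne').smul h2
  refine noMap hr ⟨_, hfc⟩ (fun z hz => hcseg ?_) fun z hz => ?_
  · obtain ⟨i, j, h⟩ := hfseg _ (hρm z)
    rw [sub_eq_zero.1 hz] at h
    exact Set.mem_iUnion₂.2 ⟨i, j, h⟩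
  · have h1 : ρ z = z := by simp [ρ, hz, hr.ne']
    have h2 := hfx z (by simp [hz])
    rw [mem_ball, dist_eq_norm] at h2
    rw [mem_ball_zero_iff] at hc
    simp only [ContinuousMap.coe_mk, h1]
    calc ‖f z - c - z‖ = ‖(f z - z) - c‖ := by ring_nf
      _ ≤ ‖f z - z‖ + ‖c‖ := norm_sub_le _ _
      _ < r := by linarith

theorem plane_isometry (p : ℕ) (hp : 2 ≤ p) (x₀ : EuclideanSpace ℝ (Fin p)) :
    ∃ ι : ℂ → EuclideanSpace ℝ (Fin p), Isometry ι ∧ ι 0 = x₀ := by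
  let a : Fin p := ⟨0, by omega⟩
  let b : Fin p := ⟨1, by omega⟩
  have hab : a ≠ b := by simp [a, b]
  refine ⟨fun z => x₀ + (EuclideanSpace.single a z.re + EuclideanSpace.single b z.im),
    Isometry.of_dist_eq fun z w => ?_, by ext; simp⟩
  have h : (EuclideanSpace.single a z.re + EuclideanSpace.single b z.im) -
      (EuclideanSpace.single a w.re + EuclideanSpace.single b w.im) =
      EuclideanSpace.single a (z - w).re + EuclideanSpace.single b (z - w).im := by
    ext i
    simp
    split_ifs <;> ring
  rw [dist_add_left, dist_eq_norm, h, dist_eq_norm, ← sq_eq_sq₀ (norm_nonneg _) (norm_nonneg _),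
    norm_add_sq_real, Complex.sq_norm, Complex.normSq_apply]
  simp [EuclideanSpace.inner_single_left, hab, sq]

/-- **Fact 2.** A compact set `C` in `ℝ^p` (`p ≥ 2`) with nonempty interior cannot be
covered by finitely many compact sets of arbitrarily small diameter such that no point of
`C` belongs to three distinct sets of the cover. -/
theorem fact2_triple_point_exists (p : ℕ) (hp : 2 ≤ p)
    (C : Set (EuclideanSpace ℝ (Fin p)))
    (hC : IsCompact C) (hint : (interior C).Nonempty) :
    ∃ ε > 0, ∀ (J : Type) [Fintype J] (Cj : J → Set (EuclideanSpace ℝ (Fin p))),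
      (∀ j, IsCompact (Cj j)) → C ⊆ ⋃ j, Cj j → (∀ j, Metric.diam (Cj j) < ε) →
      ∃ i j k : J, i ≠ j ∧ j ≠ k ∧ i ≠ k ∧ ∃ x ∈ C, x ∈ Cj i ∩ Cj j ∩ Cj k := by
  classical
  obtain ⟨x₀, hx₀⟩ := hint
  obtain ⟨r, hr, hrC⟩ := Metric.nhds_basis_closedBall.mem_iff.1 (mem_interior_iff_mem_nhds.1 hx₀)
  obtain ⟨ι, hι, hι0⟩ := plane_isometry p hp x₀
  have hιC : ∀ z ∈ closedBall (0 : ℂ) r, ι z ∈ C := fun z hz => hrC <| by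
    rw [mem_closedBall, ← hι0, hι.dist_eq]
    exact hz
  refine ⟨r / 4, by positivity, fun J _ Cj hCj hcov hdiam => ?_⟩
  -- Members missing the plane are discarded, as `infDist` to the empty set is the junk value `0`.
  obtain ⟨i, j, k, hij, hjk, hik, x, hx, h⟩ := planar (J := {j // (ι ⁻¹' Cj j).Nonempty}) hr
    (fun j => ι ⁻¹' Cj j) (fun j => (hCj j).isClosed.preimage hι.continuous) (fun j => j.2)
    (fun z hz => by
      obtain ⟨j, hj⟩ := Set.mem_iUnion.1 (hcov (hιC z hz))
      exact Set.mem_iUnion.2 ⟨⟨j, z, hj⟩, hj⟩)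
    (fun j x hx y hy => by
      rw [← hι.dist_eq]
      exact (dist_le_diam_of_mem (hCj j).isBounded hx hy).trans_lt (hdiam j))
  exact ⟨i, j, k, Subtype.coe_injective.ne hij, Subtype.coe_injective.ne hjk,
    Subtype.coe_injective.ne hik, ι x, hιC x hx, h⟩
end

section
/- Let (X, d) be a metric space and let (K_j), j ∈ J, be a finite family of nonempty compact subsets of X such that the union K = ⋃_{j∈J} K_j is connected. Then diam(K) ≤ Σ_{j∈J} diam(K_j). -/
/-!
Two sets that meet satisfy `diam (A ∪ B) ≤ diam A + diam B` (`Metric.diam_union'`). Hence, among the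
nonempty subfamilies for which the asserted bound holds, a maximal one must be the whole family:
otherwise its union and the union of the remaining sets are closed, nonempty and cover the connected
union, so they meet, and a remaining set meeting the subfamily can be adjoined to it.
-/

/-- If a finite family of nonempty compact subsets of a metric space has connected union,
then the diameter of the union is at most the sum of the diameters. -/
theorem diam_union_le_sum_diam {X : Type*} [MetricSpace X] {J : Type*} [Fintype J]
    (K : J → Set X)
    (hcompact : ∀ j, IsCompact (K j)) (hne : ∀ j, (K j).Nonempty)
    (hconn : IsConnected (⋃ j, K j)) :
    Metric.diam (⋃ j, K j) ≤ ∑ j, Metric.diam (K j) := by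
  classical
  let P : Set (Finset J) :=
    {s | s.Nonempty ∧ Metric.diam (⋃ j ∈ s, K j) ≤ ∑ j ∈ s, Metric.diam (K j)}
  have hP : P.Nonempty := by
    obtain ⟨x, hx⟩ := hconn.nonempty
    obtain ⟨j, -⟩ := Set.mem_iUnion.1 hx
    exact ⟨{j}, Finset.singleton_nonempty j, by simp⟩
  obtain ⟨s, ⟨⟨i, hi⟩, hs⟩, hmax⟩ := P.toFinite.exists_maximal hP
  have hclosed (t : Finset J) : IsClosed (⋃ j ∈ t, K j) :=
    (t.isCompact_biUnion fun j _ => hcompact j).isClosed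
  have huniv : s = Finset.univ := by
    by_contra hsu
    obtain ⟨k, hk⟩ : ∃ k, k ∉ s := by
      simpa [Finset.eq_univ_iff_forall] using hsu
    obtain ⟨a, ha⟩ := hne i
    obtain ⟨b, hb⟩ := hne k
    obtain ⟨x, -, hxs, hxc⟩ := isPreconnected_closed_iff.1 hconn.isPreconnected
      (⋃ j ∈ s, K j) (⋃ j ∈ sᶜ, K j) (hclosed s) (hclosed sᶜ)
      (by
        refine Set.iUnion_subset fun j y hy => ?_
        by_cases hj : j ∈ s
        · exact Or.inl (Set.mem_biUnion hj hy)
        · exact Or.inr (Set.mem_biUnion (Finset.mem_compl.2 hj) hy))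
      ⟨a, Set.mem_iUnion_of_mem i ha, Set.mem_biUnion hi ha⟩
      ⟨b, Set.mem_iUnion_of_mem k hb, Set.mem_biUnion (Finset.mem_compl.2 hk) hb⟩
    obtain ⟨j, hj, hxj⟩ := Set.mem_iUnion₂.1 hxc
    have hj : j ∉ s := Finset.mem_compl.1 hj
    refine hj (hmax (y := insert j s) ⟨Finset.insert_nonempty j s, ?_⟩
      (Finset.subset_insert j s) (Finset.mem_insert_self j s))
    rw [Finset.set_biUnion_insert, Finset.sum_insert hj]
    exact (Metric.diam_union' ⟨x, hxj, hxs⟩).trans (by gcongr)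
  simpa [huniv] using hs
end

section
/- Let U ⊆ ℂ be open and connected, and let f : ℂ → ℂ be holomorphic on U with deriv f z ≠ 0 for all z ∈ U. If the Schwarzian derivative of f vanishes identically on U (S f z = 0 for all z ∈ U), then f is the restriction of a Möbius transformation: there exist a, b, c, d ∈ ℂ with a d - b c ≠ 0 such that for every z ∈ U one has c z + d ≠ 0 and f(z) = (a z + b)/(c z + d). -/
/-!
The proof integrates the equation `S f = 0` by exhibiting first integrals, which avoids any choice
of a branch of `√f'` on the (possibly not simply connected) set `U`.

Write `N = f''/f'`, so that `S f = 0` reads `N' = N²/2`. Fix `z₀ ∈ U`, put `c = -N(z₀)/2` and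
`L(z) = 1 + c (z - z₀)`, the candidate denominator normalised by `L(z₀) = 1`. The function
`w = N L + 2c` satisfies `w' = (N/2) w`, hence `w²/f'` has derivative zero. As `w(z₀) = 0`, `w`
vanishes on `U`. Then `(f' L²)' = f' L w = 0`, so `f' L² = f'(z₀) ≠ 0`; in particular `L` has no
zero on `U`. Finally `f - f'(z₀) (z - z₀) / L` has derivative `f' - f'(z₀)/L² = 0`, so it is equal
to `f(z₀)`, which is the desired formula.
-/

/-- The Schwarzian derivative of a function `f : ℂ → ℂ`. -/
noncomputable def schwarzian (f : ℂ → ℂ) (z : ℂ) : ℂ :=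
  iteratedDeriv 3 f z / deriv f z - (3 / 2) * (iteratedDeriv 2 f z / deriv f z) ^ 2

theorem eq_of_hasDerivAt_zero {U : Set ℂ} (hU : IsOpen U) (hconn : IsConnected U) {F : ℂ → ℂ}
    (hF : ∀ z ∈ U, HasDerivAt F 0 z) {x y : ℂ} (hx : x ∈ U) (hy : y ∈ U) : F x = F y :=
  hU.is_const_of_deriv_eq_zero hconn.isPreconnected
    (fun z hz => (hF z hz).differentiableAt.differentiableWithinAt)
    (fun z hz => (hF z hz).deriv) hx hy

/-- A holomorphic function with nonvanishing derivative and identically vanishing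
Schwarzian derivative on a connected open set is the restriction of a Möbius
transformation. -/
theorem schwarzian_zero_iff_moebius (U : Set ℂ) (hU : IsOpen U) (hconn : IsConnected U)
    (f : ℂ → ℂ) (hf : ∀ z ∈ U, DifferentiableAt ℂ f z) (hf' : ∀ z ∈ U, deriv f z ≠ 0)
    (hS : ∀ z ∈ U, schwarzian f z = 0) :
    ∃ a b c d : ℂ, a * d - b * c ≠ 0 ∧
      ∀ z ∈ U, c * z + d ≠ 0 ∧ f z = (a * z + b) / (c * z + d) := by
  obtain ⟨z₀, hz₀⟩ := hconn.nonempty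
  have hd0 : DifferentiableOn ℂ f U := fun z hz => (hf z hz).differentiableWithinAt
  have hd1 : DifferentiableOn ℂ (deriv f) U := hd0.deriv hU
  have hd2 : DifferentiableOn ℂ (deriv (deriv f)) U := hd1.deriv hU
  set g := deriv f with hg
  set q := deriv g with hq
  set r := deriv q with hr
  have Hf : ∀ z ∈ U, HasDerivAt f (g z) z := fun z hz => (hf z hz).hasDerivAt
  have Hg : ∀ z ∈ U, HasDerivAt g (q z) z := fun z hz =>
    (hd1.differentiableAt (hU.mem_nhds hz)).hasDerivAt
  have Hq : ∀ z ∈ U, HasDerivAt q (r z) z := fun z hz =>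
    (hd2.differentiableAt (hU.mem_nhds hz)).hasDerivAt
  have hode : ∀ z ∈ U, r z = 3 / 2 * q z ^ 2 / g z := by
    intro z hz
    have h := hS z hz
    have h2 : iteratedDeriv 2 f = q := by
      rw [iteratedDeriv_succ, iteratedDeriv_one]
    have h3 : iteratedDeriv 3 f = r := by
      rw [iteratedDeriv_succ, h2]
    have hgz := hf' z hz
    rw [schwarzian, h2, h3, ← hg] at h
    field_simp at h ⊢
    linear_combination h
  set c : ℂ := -(q z₀ / g z₀) / 2 with hc
  set L : ℂ → ℂ := fun z => 1 + c * (z - z₀) with hL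
  have HL : ∀ z, HasDerivAt L c z := fun z => by
    refine ((((hasDerivAt_id z).sub_const z₀).const_mul c).const_add 1).congr_deriv ?_
    ring
  have hL₀ : L z₀ = 1 := by simp [hL]
  have hg₀ := hf' z₀ hz₀
  have hw : ∀ z ∈ U, q z / g z * L z + 2 * c = 0 := by
    intro z hz
    have hconst := eq_of_hasDerivAt_zero hU hconn
      (F := fun z => (q z / g z * L z + 2 * c) ^ 2 / g z) (fun z hz => by
        have hgz := hf' z hz
        refine ((((((Hq z hz).fun_div (Hg z hz) hgz).fun_mul (HL z)).add_const (2 * c)).fun_pow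
          2).fun_div (Hg z hz) hgz).congr_deriv ?_
        rw [hode z hz]
        field_simp
        push_cast
        field_simp
        ring) hz hz₀
    have h0 : q z₀ / g z₀ * L z₀ + 2 * c = 0 := by
      rw [hL₀, hc]; ring
    simp only [h0] at hconst
    simpa [hf' z hz] using hconst
  have hu : ∀ z ∈ U, g z * L z ^ 2 = g z₀ := by
    intro z hz
    have hconst := eq_of_hasDerivAt_zero hU hconn
      (F := fun z => g z * L z ^ 2) (fun z hz => by
        have hgz := hf' z hz
        refine ((Hg z hz).fun_mul ((HL z).fun_pow 2)).congr_deriv ?_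
        have h := hw z hz
        field_simp at h
        linear_combination L z * h) hz hz₀
    simpa [hL₀] using hconst
  have hLne : ∀ z ∈ U, L z ≠ 0 := by
    intro z hz h
    have := hu z hz
    rw [h] at this
    exact hg₀ (by simpa using this.symm)
  have hfin : ∀ z ∈ U, f z - g z₀ * (z - z₀) / L z = f z₀ := by
    intro z hz
    have hconst := eq_of_hasDerivAt_zero hU hconn
      (F := fun z => f z - g z₀ * (z - z₀) / L z) (fun z hz => by
        have hLz := hLne z hz
        refine ((Hf z hz).fun_sub ((((hasDerivAt_id z).sub_const z₀).const_mul (g z₀)).fun_div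
          (HL z) hLz)).congr_deriv ?_
        have h := hu z hz
        have hLe : L z = 1 + c * (z - z₀) := rfl
        simp only [id]
        field_simp
        linear_combination h - g z₀ * hLe) hz hz₀
    simpa using hconst
  refine ⟨f z₀ * c + g z₀, f z₀ * (1 - c * z₀) - g z₀ * z₀, c, 1 - c * z₀, ?_, fun z hz => ?_⟩
  · convert hg₀ using 1
    ring
  · have hLe : c * z + (1 - c * z₀) = L z := by simp only [hL]; ring
    have hLz := hLne z hz
    rw [hLe]
    refine ⟨hLz, ?_⟩
    have h := hfin z hz
    rw [eq_div_iff hLz]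
    field_simp at h
    linear_combination h - f z₀ * hLe
end
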